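/- Let D be a Krull domain with quotient field K, let G be a torsion-free abelian group with a fixed total order compatible with addition, let P be a height-one prime ideal of D and c ∈ K with v_P(c) = 1, and let α ∈ G with α > 0. Then the element c + X^α is irreducible in the group algebra K[G]. -/

import Mathlib

open scoped nonZeroDivisors

noncomputable section

/-- A height-one prime ideal (prime divisor) of a commutative ring:
a nonzero prime ideal that is minimal among nonzero prime ideals. -/
def IsHeightOnePrime {R : Type*} [CommRing R] (P : Ideal R) : Prop :=
  P.IsPrime ∧ P ≠ ⊥ ∧ ∀ Q : Ideal R, Q.IsPrime → Q ≠ ⊥ → Q ≤ P → Q = P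

/-- The divisorial (v-)closure `I_v = (R : (R : I))` of a fractional ideal. -/
def divClosure {R : Type*} [CommRing R] [IsDomain R] {K : Type*} [Field K] [Algebra R K]
    [IsFractionRing R K] (I : FractionalIdeal R⁰ K) : FractionalIdeal R⁰ K :=
  1 / (1 / I)

/-- A Krull domain: a domain that is completely integrally closed and satisfies the
ascending chain condition on (integral) divisorial ideals. -/
def IsKrullDomain (R : Type*) [CommRing R] [IsDomain R] : Prop :=
  (∀ x : FractionRing R,
      (∃ c : R, c ≠ 0 ∧ ∀ n : ℕ,
          IsLocalization.IsInteger R (algebraMap R (FractionRing R) c * x ^ n)) →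
      IsLocalization.IsInteger R x) ∧
  (∀ f : ℕ → Ideal R,
      (∀ n, divClosure (f n : FractionalIdeal R⁰ (FractionRing R)) =
        (f n : FractionalIdeal R⁰ (FractionRing R))) →
      (∀ n, f n ≤ f (n + 1)) → ∃ n, ∀ m, n ≤ m → f m = f n)

/-- Every divisor class of the Krull domain `R` (i.e. every class of v-invertible divisorial
fractional ideals modulo principal ones) contains infinitely many height-one prime ideals. -/
def HasInfinitelyManyPrimeDivisorsInEachClass (R : Type*) [CommRing R] [IsDomain R] : Prop :=
  ∀ I : FractionalIdeal R⁰ (FractionRing R), I ≠ 0 → divClosure I = I →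
    divClosure (I * (1 / I)) = 1 →
    {P : Ideal R | IsHeightOnePrime P ∧ ∃ c : FractionRing R, c ≠ 0 ∧
      (P : FractionalIdeal R⁰ (FractionRing R)) =
        divClosure (FractionalIdeal.spanSingleton R⁰ c * I)}.Infinite

/-- The subset `P·D_P` of `K`: elements of the form `a / b` with `a ∈ P`, `b ∉ P`. -/
def primeLocSet (D K : Type*) [CommRing D] [Field K] [Algebra D K] (P : Ideal D) : Set K :=
  {x : K | ∃ a ∈ P, ∃ b : D, b ∉ P ∧ algebraMap D K b * x = algebraMap D K a}

/-- `v_P(x) = 1` for the normalized `P`-adic valuation at a height-one prime `P` of a Krull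
domain: `x ∈ P·D_P` but `x` is not a product of two elements of `P·D_P`. -/
def valOneAt (D : Type*) {K : Type*} [CommRing D] [Field K] [Algebra D K] (P : Ideal D)
    (x : K) : Prop :=
  x ∈ primeLocSet D K P ∧ ¬ ∃ y ∈ primeLocSet D K P, ∃ z ∈ primeLocSet D K P, x = y * z

theorem aux_intClosed {D : Type*} [CommRing D] [IsDomain D] (hD : IsKrullDomain D) :
    IsIntegrallyClosed D := by
  rw [isIntegrallyClosed_iff (FractionRing D)]
  intro x hx
  obtain ⟨r, hr, h⟩ := hx.isAlmostIntegral
  obtain ⟨y, hy⟩ := hD.1 x ⟨r, nonZeroDivisors.ne_zero hr, fun n => by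
    obtain ⟨z, hz⟩ := h n
    exact ⟨z, by rw [hz, Algebra.smul_def]⟩⟩
  exact ⟨y, hy⟩

/-- V dominates `D_P`. -/
def auxDom (D : Type*) {K : Type*} [CommRing D] [Field K] [Algebra D K] (P : Ideal D)
    (V : ValuationSubring K) : Prop :=
  (∀ a ∈ P, V.valuation (algebraMap D K a) < 1) ∧
  (∀ a ∉ P, V.valuation (algebraMap D K a) = 1)

theorem aux_dom {D K : Type*} [CommRing D] [IsDomain D] [Field K]
    [Algebra D K] [IsFractionRing D K] (hD : IsIntegrallyClosed D)
    (P : Ideal D) [hP : P.IsPrime] :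
    (∃ V : ValuationSubring K, auxDom D P V) ∧
    ∀ x : K, (∀ V : ValuationSubring K, auxDom D P V → V.valuation x ≤ 1) →
      ∃ a b : D, b ∉ P ∧ algebraMap D K b * x = algebraMap D K a := by
  have hS : P.primeCompl ≤ D⁰ := P.primeCompl_le_nonZeroDivisors
  let φ := Localization.mapToFractionRing K P.primeCompl (Localization.AtPrime P) hS
  let R : LocalSubring K := LocalSubring.range φ.toRingHom
  have hmem : ∀ x, x ∈ R.toSubring ↔ x ∈ φ.range := fun x => Iff.rfl
  have hic : IsIntegrallyClosed φ.range :=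
    isIntegrallyClosed_of_isLocalization _ P.primeCompl hS
  have hicin : IsIntegrallyClosedIn φ.range K :=
    (isIntegrallyClosed_iff_isIntegrallyClosedIn K).1 hic
  have hR : IsIntegrallyClosedIn R.toSubring K := hicin
  have hDom : ∀ V : ValuationSubring K, R ≤ V.toLocalSubring → auxDom D P V := by
    intro V hV
    have hDR : ∀ a : D, algebraMap D K a ∈ R.toSubring := fun a =>
      (hmem _).2 (φ.range.algebraMap_mem a)
    have hDV : ∀ a : D, V.valuation (algebraMap D K a) ≤ 1 := fun a =>
      (V.valuation_le_one_iff _).2 (hV.1 (hDR a))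
    have hinv : ∀ b : D, b ∉ P → (algebraMap D K b)⁻¹ ∈ R.toSubring := fun b hb =>
      (hmem _).2 ((Localization.subalgebra.mem_range_mapToFractionRing_iff_ofField K
        P.primeCompl hS _ _).2 ⟨1, b, hb, by simp⟩)
    refine ⟨fun a ha => lt_of_le_of_ne (hDV a) fun h1 => ?_, fun b hb => ?_⟩
    · have hloc := hV.2
      have ha0 : algebraMap D K a ≠ 0 := by
        intro h0; rw [h0] at h1; simp at h1
      have hu : IsUnit (Subring.inclusion hV.1 ⟨algebraMap D K a, hDR a⟩) := by
        refine isUnit_iff_exists_inv.mpr ⟨⟨(algebraMap D K a)⁻¹, ?_⟩, Subtype.ext ?_⟩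
        · exact (V.valuation_le_one_iff _).1 (by rw [map_inv₀, h1, inv_one])
        · exact mul_inv_cancel₀ ha0
      obtain ⟨⟨y, hy⟩, hy'⟩ := isUnit_iff_exists_inv.mp (hloc.1 _ hu)
      have hy' : algebraMap D K a * y = 1 := congrArg Subtype.val hy'
      obtain ⟨r, s, hs, rfl⟩ := (Localization.subalgebra.mem_range_mapToFractionRing_iff_ofField K
        P.primeCompl hS _ _).1 ((hmem _).1 hy)
      have hs0 : algebraMap D K s ≠ 0 := by
        intro h0
        rw [h0] at hy'; simp at hy'
      have : algebraMap D K (a * r) = algebraMap D K s := by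
        rw [map_mul]; field_simp at hy'; exact hy'
      have := IsFractionRing.injective D K this
      exact hs (this ▸ P.mul_mem_right r ha)
    · refine le_antisymm (hDV b) ?_
      have h1 : V.valuation (algebraMap D K b)⁻¹ ≤ 1 :=
        (V.valuation_le_one_iff _).2 (hV.1 (hinv b hb))
      have hb0 : algebraMap D K b ≠ 0 := by
        rw [Ne, IsFractionRing.to_map_eq_zero_iff]
        rintro rfl; exact hb P.zero_mem
      have hne : V.valuation (algebraMap D K b) ≠ 0 := by simpa using hb0
      rw [map_inv₀] at h1
      exact (inv_le_one₀ (zero_lt_iff.2 hne)).1 h1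
  refine ⟨?_, fun x hx => ?_⟩
  · obtain ⟨V, hV⟩ := R.exists_le_valuationSubring
    exact ⟨V, hDom V hV⟩
  · have hxR : x ∈ R.toSubring := by
      by_contra hxR
      obtain ⟨V, hV, hxV⟩ := R.exists_le_valuationSubring_of_isIntegrallyClosedIn hxR
      exact hxV ((V.valuation_le_one_iff _).1 (hx V (hDom V hV)))
    obtain ⟨r, s, hs, rfl⟩ := (Localization.subalgebra.mem_range_mapToFractionRing_iff_ofField K
        P.primeCompl hS _ _).1 ((hmem _).1 hxR)
    have hb0 : algebraMap D K s ≠ 0 := by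
      rw [Ne, IsFractionRing.to_map_eq_zero_iff]
      rintro rfl; exact hs P.zero_mem
    exact ⟨r, s, hs, by field_simp⟩

theorem aux_minmax {K G Γ : Type*} [Field K] [LinearOrder G] [LinearOrderedCommGroupWithZero Γ]
    (v : Valuation K Γ) (g : G →₀ K) (hg : g ≠ 0) :
    ∃ i, g i ≠ 0 ∧ (∀ p, v (g p) ≤ v (g i)) ∧ ∀ p < i, v (g p) < v (g i) := by
  classical
  have hne : g.support.Nonempty := Finsupp.support_nonempty_iff.2 hg
  obtain ⟨m, hm, hmax⟩ := Finset.exists_max_image g.support (fun p => v (g p)) hne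
  have hmax' : ∀ p, v (g p) ≤ v (g m) := by
    intro p
    by_cases hp : g p = 0
    · simp [hp]
    · exact hmax p (by simpa using hp)
  obtain ⟨i, hi, hmin⟩ := Finset.exists_min_image
    (g.support.filter fun p => v (g p) = v (g m)) id ⟨m, by simpa using hm⟩
  simp only [Finset.mem_filter, Finsupp.mem_support_iff] at hi hmin
  refine ⟨i, hi.1, fun p => hi.2 ▸ hmax' p, fun p hp => ?_⟩
  rw [hi.2]
  refine lt_of_le_of_ne (hmax' p) fun h => ?_
  have hp0 : g p ≠ 0 := by
    intro h0
    rw [h0, map_zero, eq_comm, map_eq_zero] at h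
    exact (Finsupp.mem_support_iff.1 hm) h
  exact absurd (hmin p ⟨hp0, h⟩) (not_le.2 hp)

theorem aux_gauss {K G Γ : Type*} [Field K] [AddCommGroup G] [LinearOrder G]
    [IsOrderedAddMonoid G] [LinearOrderedCommGroupWithZero Γ]
    (v : Valuation K Γ) (g h : AddMonoidAlgebra K G) (i j : G)
    (gi : g.coeff i ≠ 0) (hj : h.coeff j ≠ 0)
    (g1 : ∀ p, v (g.coeff p) ≤ v (g.coeff i)) (g2 : ∀ p < i, v (g.coeff p) < v (g.coeff i))
    (h1 : ∀ p, v (h.coeff p) ≤ v (h.coeff j)) (h2 : ∀ p < j, v (h.coeff p) < v (h.coeff j)) :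
    v ((g * h).coeff (i + j)) = v (g.coeff i) * v (h.coeff j) := by
  classical
  have vi : 0 < v (g.coeff i) := zero_lt_iff.2 (by simpa using gi)
  have vj : 0 < v (h.coeff j) := zero_lt_iff.2 (by simpa using hj)
  rw [AddMonoidAlgebra.coeff_mul_apply_left, Finsupp.sum,
    ← Finset.add_sum_erase _ _ (Finsupp.mem_support_iff.2 gi), neg_add_cancel_left, ← map_mul]
  apply Valuation.map_add_eq_of_lt_left
  apply Valuation.map_sum_lt
  · simp [gi, hj]
  · intro p hp
    rw [map_mul, map_mul]
    rcases lt_or_gt_of_ne (Finset.ne_of_mem_erase hp) with hlt | hgt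
    · calc _ ≤ v (g.coeff p) * v (h.coeff j) := by gcongr; exact h1 _
        _ < _ := (mul_lt_mul_iff_left₀ vj).2 (g2 p hlt)
    · have : -p + (i + j) < j := by
        rw [neg_add_lt_iff_lt_add]
        exact add_lt_add_left hgt j
      calc _ ≤ v (g.coeff i) * v (h.coeff (-p + (i+j))) := by gcongr; exact g1 p
        _ < _ := (mul_lt_mul_iff_right₀ vi).2 (h2 _ this)

theorem aux_unit {K G : Type*} [Field K] [AddCommGroup G] [LinearOrder G]
    (g : AddMonoidAlgebra K G) (i : G) (hi : g.coeff i ≠ 0)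
    (h : ∀ p, g.coeff p ≠ 0 → p = i) : IsUnit g := by
  have : g = AddMonoidAlgebra.single i (g.coeff i) := by
    ext p
    by_cases hp : g.coeff p = 0
    · by_cases hpi : i = p
      · subst hpi; simp
      · simp [Finsupp.single_apply, hpi, hp]
    · rw [h p hp]; simp
  rw [this]
  refine isUnit_iff_exists_inv.2 ⟨AddMonoidAlgebra.single (-i) (g.coeff i)⁻¹, ?_⟩
  rw [AddMonoidAlgebra.single_mul_single, add_neg_cancel, mul_inv_cancel₀ hi]
  rfl

/-- extreme exponents -/
theorem aux_ext {K G : Type*} [Field K] [LinearOrder G] (g : G →₀ K) (hg : g ≠ 0) :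
    ∃ i, g i ≠ 0 ∧ ∀ p, g p ≠ 0 → p ≤ i := by
  obtain ⟨i, hi, h⟩ := Finset.exists_max_image g.support id (Finsupp.support_nonempty_iff.2 hg)
  exact ⟨i, by simpa using hi, fun p hp => h p (by simpa using hp)⟩

theorem aux_ext' {K G : Type*} [Field K] [LinearOrder G] (g : G →₀ K) (hg : g ≠ 0) :
    ∃ i, g i ≠ 0 ∧ ∀ p, g p ≠ 0 → i ≤ p := by
  obtain ⟨i, hi, h⟩ := Finset.exists_min_image g.support id (Finsupp.support_nonempty_iff.2 hg)
  exact ⟨i, by simpa using hi, fun p hp => h p (by simpa using hp)⟩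

theorem aux_mul_coeff {K G : Type*} [Field K] [AddCommGroup G]
    (g h : AddMonoidAlgebra K G) (i j : G)
    (H : ∀ p q, g.coeff p ≠ 0 → h.coeff q ≠ 0 → p + q = i + j → p = i) :
    (g * h).coeff (i + j) = g.coeff i * h.coeff j := by
  classical
  rw [AddMonoidAlgebra.coeff_mul_apply_left, Finsupp.sum, Finset.sum_eq_single i]
  · rw [neg_add_cancel_left]
  · intro p hp hpi
    by_contra hne
    exact hpi (H p _ (left_ne_zero_of_mul hne) (right_ne_zero_of_mul hne) (by abel))
  · intro hi
    rw [Finsupp.notMem_support_iff.1 hi, zero_mul]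

theorem aux_exists {K G : Type*} [Field K] [AddCommGroup G]
    (g h : AddMonoidAlgebra K G) (t : G) (ht : (g * h).coeff t ≠ 0) :
    ∃ p q, g.coeff p ≠ 0 ∧ h.coeff q ≠ 0 ∧ p + q = t := by
  rw [AddMonoidAlgebra.coeff_mul_apply_left, Finsupp.sum] at ht
  obtain ⟨p, hp, hne⟩ := Finset.exists_ne_zero_of_sum_ne_zero ht
  exact ⟨p, _, left_ne_zero_of_mul hne, right_ne_zero_of_mul hne, by abel⟩

/-- **Lemma (generalized Eisenstein criterion, Chang's Lemma 5, special case).**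
Let `D` be a Krull domain with quotient field `K`, `G` a torsion-free abelian group with a
total order compatible with addition, `P` a height-one prime of `D`, `c ∈ K` with
`v_P(c) = 1`, and `α ∈ G` with `α > 0`. Then `c + X^α` is irreducible in `K[G]`. -/
theorem eisenstein_irreducible {D K : Type*} [CommRing D] [IsDomain D] [Field K]
    [Algebra D K] [IsFractionRing D K] {G : Type*} [AddCommGroup G] [LinearOrder G]
    [CovariantClass G G (· + ·) (· < ·)]
    (htf : IsAddTorsionFree G)
    (hD : IsKrullDomain D)
    (P : Ideal D) (hP : IsHeightOnePrime P)
    (c : K) (hc : valOneAt D P c)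
    (α : G) (hα : 0 < α) :
    Irreducible (AddMonoidAlgebra.single (0 : G) c + AddMonoidAlgebra.single α (1 : K)) := by
  haveI : IsOrderedAddMonoid G :=
    { add_le_add_left := fun a b hab d => by
        rcases hab.eq_or_lt with rfl | hlt
        · exact le_rfl
        · rw [add_comm a, add_comm b]
          exact (CovariantClass.elim (μ := (· + ·)) (r := (· < ·)) d hlt).le }
  haveI hPp : P.IsPrime := hP.1
  obtain ⟨⟨V₀, hV₀⟩, hA⟩ := aux_dom (K := K) (aux_intClosed hD) P
  obtain ⟨hcM, hcn⟩ := hc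
  have hc0 : c ≠ 0 := by
    rintro rfl
    have h0 : (0 : K) ∈ primeLocSet D K P :=
      ⟨0, P.zero_mem, 1, fun h => hPp.ne_top ((Ideal.eq_top_iff_one _).2 h), by simp⟩
    exact hcn ⟨0, h0, 0, h0, by simp⟩
  have hcV : ∀ V : ValuationSubring K, auxDom D P V → V.valuation c < 1 := by
    intro V hV
    obtain ⟨a, ha, b, hb, hab⟩ := hcM
    have := congrArg V.valuation hab
    rw [map_mul, hV.2 b hb, one_mul] at this
    rw [this]; exact hV.1 a ha
  set f := AddMonoidAlgebra.single (0 : G) c + AddMonoidAlgebra.single α (1 : K) with hf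
  have hf0 : f.coeff 0 = c := by simp [hf, Finsupp.single_apply, hα.ne']
  have hfα : f.coeff α = 1 := by simp [hf, Finsupp.single_apply, hα.ne]
  have hfo : ∀ t, f.coeff t ≠ 0 → t = 0 ∨ t = α := by
    intro t ht
    by_contra! hcon
    exact ht (by simp [hf, Finsupp.single_apply, hcon.1.symm, hcon.2.symm])
  clear_value f
  -- key claim
  have key : ∀ g h : AddMonoidAlgebra K G, g * h = f → ∃ i₀ i₁ j₀ j₁,
      (g.coeff i₀ ≠ 0 ∧ ∀ p, g.coeff p ≠ 0 → i₀ ≤ p) ∧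
      (g.coeff i₁ ≠ 0 ∧ ∀ p, g.coeff p ≠ 0 → p ≤ i₁) ∧
      (h.coeff j₀ ≠ 0 ∧ ∀ p, h.coeff p ≠ 0 → j₀ ≤ p) ∧
      (h.coeff j₁ ≠ 0 ∧ ∀ p, h.coeff p ≠ 0 → p ≤ j₁) ∧
      i₀ + j₀ = 0 ∧ i₁ + j₁ = α := by
    intro g h hgh
    have hfne : f ≠ 0 := by rintro rfl; simp at hfα
    have hg : g.coeff ≠ 0 := by
      intro h0
      have : g = 0 := by ext p; simp [h0]
      exact hfne (by rw [← hgh, this, zero_mul])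
    have hh : h.coeff ≠ 0 := by
      intro h0
      have : h = 0 := by ext p; simp [h0]
      exact hfne (by rw [← hgh, this, mul_zero])
    obtain ⟨i₀, a1, a2⟩ := aux_ext' _ hg
    obtain ⟨i₁, b1, b2⟩ := aux_ext _ hg
    obtain ⟨j₀, c1, c2⟩ := aux_ext' _ hh
    obtain ⟨j₁, d1, d2⟩ := aux_ext _ hh
    refine ⟨i₀, i₁, j₀, j₁, ⟨a1, a2⟩, ⟨b1, b2⟩, ⟨c1, c2⟩, ⟨d1, d2⟩, ?_, ?_⟩
    · have e := aux_mul_coeff g h i₀ j₀ fun p q hp hq hpq => by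
        refine le_antisymm (le_of_not_gt fun hlt => ?_) (a2 p hp)
        exact absurd hpq (add_lt_add_of_lt_of_le hlt (c2 q hq)).ne'
      obtain ⟨p, q, hp, hq, hpq⟩ := aux_exists g h 0 (by rw [hgh, hf0]; exact hc0)
      have hle : i₀ + j₀ ≤ 0 := hpq ▸ add_le_add (a2 p hp) (c2 q hq)
      rcases hfo (i₀ + j₀) (by rw [← hgh, e]; exact mul_ne_zero a1 c1) with h | h
      · exact h
      · rw [h] at hle; exact absurd hα (not_lt.2 hle)
    · have e := aux_mul_coeff g h i₁ j₁ fun p q hp hq hpq => by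
        refine le_antisymm (b2 p hp) (le_of_not_gt fun hlt => ?_)
        exact absurd hpq (add_lt_add_of_lt_of_le hlt (d2 q hq)).ne
      obtain ⟨p, q, hp, hq, hpq⟩ := aux_exists g h α (by rw [hgh, hfα]; exact one_ne_zero)
      have hle : α ≤ i₁ + j₁ := hpq ▸ add_le_add (b2 p hp) (d2 q hq)
      rcases hfo (i₁ + j₁) (by rw [← hgh, e]; exact mul_ne_zero b1 d1) with h | h
      · rw [h] at hle; exact absurd hα (not_lt.2 hle)
      · exact h
  constructor
  · intro hu
    obtain ⟨h, hh⟩ := isUnit_iff_exists_inv.1 hu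
    -- compare extreme exponents
    obtain ⟨p, q, hp, hq, hpq⟩ := aux_exists f h 0 (by
      rw [hh, AddMonoidAlgebra.one_def]; simp)
    have hhne : h.coeff ≠ 0 := by
      intro h0; rw [h0] at hq; simp at hq
    obtain ⟨j₀, c1, c2⟩ := aux_ext' _ hhne
    obtain ⟨j₁, d1, d2⟩ := aux_ext _ hhne
    have hfb : ∀ p, f.coeff p ≠ 0 → 0 ≤ p ∧ p ≤ α := by
      intro p hp
      rcases hfo p hp with rfl | rfl
      · exact ⟨le_rfl, hα.le⟩
      · exact ⟨hα.le, le_rfl⟩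
    have e0 := aux_mul_coeff f h 0 j₀ fun p q hp hq hpq => by
      refine le_antisymm (le_of_not_gt fun hlt => ?_) (hfb p hp).1
      exact absurd hpq (add_lt_add_of_lt_of_le hlt (c2 q hq)).ne'
    have e1 := aux_mul_coeff f h α j₁ fun p q hp hq hpq => by
      refine le_antisymm (hfb p hp).2 (le_of_not_gt fun hlt => ?_)
      exact absurd hpq (add_lt_add_of_lt_of_le hlt (d2 q hq)).ne
    have hone : ∀ t : G, (1 : AddMonoidAlgebra K G).coeff t ≠ 0 → t = 0 := by
      intro t ht
      by_contra hne
      exact ht (by rw [AddMonoidAlgebra.one_def]; simp [Finsupp.single_apply, Ne.symm hne])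
    have z0 := hone (0 + j₀) (by rw [← hh, e0, hf0]; exact mul_ne_zero hc0 c1)
    have z1 := hone (α + j₁) (by rw [← hh, e1, hfα]; exact mul_ne_zero one_ne_zero d1)
    have : j₀ ≤ j₁ := c2 _ d1
    have : 0 + j₀ < α + j₁ := add_lt_add_of_lt_of_le hα this
    rw [z0, z1] at this
    exact lt_irrefl _ this
  · intro g h hgh
    obtain ⟨i₀, i₁, j₀, j₁, ⟨a1, a2⟩, ⟨b1, b2⟩, ⟨c1, c2⟩, ⟨d1, d2⟩, s0, s1⟩ := key g h hgh.symm
    by_cases hi : i₀ = i₁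
    · left
      exact aux_unit g i₀ a1 fun p hp => le_antisymm (hi ▸ b2 p hp) (a2 p hp)
    by_cases hj : j₀ = j₁
    · right
      exact aux_unit h j₀ c1 fun p hp => le_antisymm (hj ▸ d2 p hp) (c2 p hp)
    exfalso
    have hi' : i₀ < i₁ := lt_of_le_of_ne (a2 _ b1) hi
    have hj' : j₀ < j₁ := lt_of_le_of_ne (c2 _ d1) hj
    have e0 : g.coeff i₀ * h.coeff j₀ = c := by
      rw [← hf0, hgh, ← s0]
      refine (aux_mul_coeff g h i₀ j₀ fun p q hp hq hpq => ?_).symm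
      refine le_antisymm (le_of_not_gt fun hlt => ?_) (a2 p hp)
      exact absurd hpq (add_lt_add_of_lt_of_le hlt (c2 q hq)).ne'
    have e1 : g.coeff i₁ * h.coeff j₁ = 1 := by
      rw [← hfα, hgh, ← s1]
      refine (aux_mul_coeff g h i₁ j₁ fun p q hp hq hpq => ?_).symm
      refine le_antisymm (b2 p hp) (le_of_not_gt fun hlt => ?_)
      exact absurd hpq (add_lt_add_of_lt_of_le hlt (d2 q hq)).ne
    have val : ∀ V : ValuationSubring K, auxDom D P V →
        V.valuation (g.coeff i₀ * h.coeff j₁) < 1 ∧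
        V.valuation (g.coeff i₁ * h.coeff j₀) < 1 := by
      intro V hV
      have hg : g.coeff ≠ 0 := by intro h0; rw [h0] at a1; simp at a1
      have hh : h.coeff ≠ 0 := by intro h0; rw [h0] at c1; simp at c1
      obtain ⟨i, gi, g1, g2⟩ := aux_minmax V.valuation g.coeff hg
      obtain ⟨j, hj, h1, h2⟩ := aux_minmax V.valuation h.coeff hh
      have eg := aux_gauss V.valuation g h i j gi hj g1 g2 h1 h2
      have hge : 1 ≤ V.valuation (g.coeff i) * V.valuation (h.coeff j) := by
        rw [← map_one V.valuation, ← e1, map_mul]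
        exact mul_le_mul' (g1 _) (h1 _)
      have hij : i + j = α := by
        rcases hfo (i + j) (by
          intro h0
          rw [← hgh, h0, map_zero] at eg
          rw [← eg] at hge
          exact absurd hge (not_le.2 zero_lt_one)) with h0 | h0
        · rw [← hgh, h0, hf0] at eg
          rw [← eg] at hge
          exact absurd hge (not_le.2 (hcV V hV))
        · exact h0
      have ii : i = i₁ := by
        refine le_antisymm (b2 i gi) (le_of_not_gt fun hlt => ?_)
        exact absurd (hij.trans s1.symm) (add_lt_add_of_lt_of_le hlt (d2 j hj)).ne
      subst ii
      have jj : j = j₁ := add_left_cancel (hij.trans s1.symm)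
      subst jj
      have vi : 0 < V.valuation (g.coeff i) := zero_lt_iff.2 (by simpa using gi)
      have vj : 0 < V.valuation (h.coeff j) := zero_lt_iff.2 (by simpa using d1)
      rw [← map_one V.valuation, ← e1]
      simp only [map_mul]
      exact ⟨(mul_lt_mul_iff_left₀ vj).2 (g2 _ hi'), (mul_lt_mul_iff_right₀ vi).2 (h2 _ hj')⟩
    have mem : ∀ x : K, (∀ V : ValuationSubring K, auxDom D P V → V.valuation x < 1) →
        x ∈ primeLocSet D K P := by
      intro x hx
      obtain ⟨a, b, hb, hab⟩ := hA x fun V hV => (hx V hV).le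
      refine ⟨a, ?_, b, hb, hab⟩
      by_contra ha
      have := congrArg V₀.valuation hab
      rw [map_mul, hV₀.2 b hb, hV₀.2 a ha, one_mul] at this
      exact (hx V₀ hV₀).ne this
    refine hcn ⟨_, mem _ fun V hV => (val V hV).1, _, mem _ fun V hV => (val V hV).2, ?_⟩
    calc c = (g.coeff i₀ * h.coeff j₀) * (g.coeff i₁ * h.coeff j₁) := by rw [e0, e1, mul_one]
      _ = _ := by ring

end
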